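/- Let θ ∈ (0, 1/2]. If U : T[θ, S₁] → T[θ, S₁] is a linear isometry, then there exist a sequence (ε_i)_{i=1}^∞ with values in {−1, 1} and a permutation π of {1, 2, …, ⌈θ⁻¹⌉} such that U e_i = ε_i e_{π(i)} for 1 ≤ i ≤ ⌈θ⁻¹⌉ and U e_i = ε_i e_i for i > ⌈θ⁻¹⌉. -/

import Mathlib

open scoped BigOperators

noncomputable section

/-- Projection of a finitely supported vector onto the coordinates in `E`. -/
def tsProj (E : Finset ℕ+) (x : ℕ+ →₀ ℝ) : ℕ+ →₀ ℝ :=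
  x.filter fun i => i ∈ E

/-- The Schreier families `S_n` on the positive integers:
`S₁` consists of the sets `F` with `|F| ≤ min F` (together with `∅`), and `S_{n+1}`
consists of unions `F₁ ∪ ⋯ ∪ F_d` of nonempty members `F₁ < ⋯ < F_d` of `S_n`
with `d ≤ min F₁` (together with `∅`). -/
def Schreier : ℕ → Set (Finset ℕ+)
  | 0 => {F | F.card ≤ 1}
  | 1 => {F | ∀ a ∈ F, F.card ≤ (a : ℕ)}
  | n + 2 =>
      {F | F = ∅ ∨
        ∃ (d : ℕ) (G : Fin d → Finset ℕ+),
          0 < d ∧ (∀ i, G i ∈ Schreier (n + 1)) ∧ (∀ i, (G i).Nonempty) ∧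
          (∀ i j : Fin d, i < j → ∀ a ∈ G i, ∀ b ∈ G j, a < b) ∧
          (∀ i, ∀ a ∈ G i, d ≤ (a : ℕ)) ∧ F = Finset.univ.biUnion G}

/-- A tuple of nonempty finite sets `E 0 < E 1 < ⋯` whose set of minima belongs to `S`. -/
def TsAdmissible (S : Set (Finset ℕ+)) {d : ℕ} (E : Fin d → Finset ℕ+) : Prop :=
  (∀ i, (E i).Nonempty) ∧
  (∀ i j : Fin d, i < j → ∀ a ∈ E i, ∀ b ∈ E j, a < b) ∧
  ∃ μ : Fin d → ℕ+, (∀ i, IsLeast (↑(E i) : Set ℕ+) (μ i)) ∧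
    Finset.univ.image μ ∈ S

/-- The iterated norms `‖·‖_m` in the construction of the Tsirelson norm:
`‖x‖₀` is the supremum norm and
`‖x‖_{m+1} = max(‖x‖_m, sup{θ ∑ᵢ ‖Eᵢ x‖_m : E₁ < ⋯ < E_d, {min Eᵢ} ∈ S})`. -/
def tnormAux (θ : ℝ) (S : Set (Finset ℕ+)) : ℕ → (ℕ+ →₀ ℝ) → ℝ
  | 0, x => ⨆ i, |x i|
  | m + 1, x =>
      max (tnormAux θ S m x)
        (sSup {r : ℝ | ∃ (d : ℕ) (E : Fin d → Finset ℕ+), TsAdmissible S E ∧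
          r = θ * ∑ i, tnormAux θ S m (tsProj (E i) x)})

/-- The Tsirelson norm `‖x‖_{θ,S} = sup_m ‖x‖_m` on `c₀₀`. -/
def tnorm (θ : ℝ) (S : Set (Finset ℕ+)) (x : ℕ+ →₀ ℝ) : ℝ :=
  ⨆ m : ℕ, tnormAux θ S m x

/-- `X`, together with the sequence `e` of unit vectors, is (a realization of) the
Tsirelson space `T[θ, S_n]`: a Banach space containing `c₀₀` isometrically
(w.r.t. the Tsirelson norm) as a dense subspace, in which `(e i)` is a
(1-unconditional) basis, i.e. every `x` has a unique expansion `x = ∑ᵢ aᵢ eᵢ`. -/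
structure IsTsirelsonSpace (θ : ℝ) (n : ℕ) (X : Type*) [NormedAddCommGroup X]
    [NormedSpace ℝ X] (e : ℕ+ → X) : Prop where
  complete : CompleteSpace X
  norm_embed : ∀ a : ℕ+ →₀ ℝ, ‖a.sum fun i c => c • e i‖ = tnorm θ (Schreier n) a
  dense_embed : DenseRange fun a : ℕ+ →₀ ℝ => a.sum fun i c => c • e i
  expansion : ∀ x : X, ∃! a : ℕ+ → ℝ, HasSum (fun i => a i • e i) x


section basics

def TsSucc {d : ℕ} (E : Fin d → Finset ℕ+) : Prop :=
  ∀ i j : Fin d, i < j → ∀ a ∈ E i, ∀ b ∈ E j, a < b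

def tsl1 (x : ℕ+ →₀ ℝ) : ℝ := ∑ i ∈ x.support, |x i|

lemma tsl1_nonneg (x : ℕ+ →₀ ℝ) : 0 ≤ tsl1 x := Finset.sum_nonneg fun _ _ => abs_nonneg _

lemma tsProj_apply (E : Finset ℕ+) (x : ℕ+ →₀ ℝ) (i : ℕ+) :
    tsProj E x i = if i ∈ E then x i else 0 := by
  simp [tsProj, Finsupp.filter_apply]

lemma abs_tsProj_le (E : Finset ℕ+) (x : ℕ+ →₀ ℝ) (i : ℕ+) :
    |tsProj E x i| ≤ |x i| := by
  rw [tsProj_apply]; split_ifs <;> simp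

lemma tsl1_tsProj (E : Finset ℕ+) (x : ℕ+ →₀ ℝ) :
    tsl1 (tsProj E x) = ∑ i ∈ x.support, if i ∈ E then |x i| else 0 := by
  unfold tsl1
  rw [Finset.sum_subset (s₂ := x.support)]
  · refine Finset.sum_congr rfl fun i _ => ?_
    rw [tsProj_apply]; split_ifs <;> simp
  · intro i hi
    rw [Finsupp.mem_support_iff, tsProj_apply] at hi
    rw [Finsupp.mem_support_iff]
    intro h; simp [h] at hi
  · intro i _ hi
    simpa using hi

lemma TsSucc.unique {d : ℕ} {E : Fin d → Finset ℕ+} (h : TsSucc E) {i j : Fin d} {a : ℕ+}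
    (hi : a ∈ E i) (hj : a ∈ E j) : i = j := by
  rcases lt_trichotomy i j with hl | hl | hl
  · exact absurd (h i j hl a hi a hj) (lt_irrefl _)
  · exact hl
  · exact absurd (h j i hl a hj a hi) (lt_irrefl _)

lemma sum_tsl1_le {d : ℕ} {E : Fin d → Finset ℕ+} (h : TsSucc E) (x : ℕ+ →₀ ℝ) :
    ∑ l, tsl1 (tsProj (E l) x) ≤ tsl1 x := by
  simp_rw [tsl1_tsProj]
  rw [Finset.sum_comm]
  refine Finset.sum_le_sum fun i _ => ?_
  by_cases hi : ∃ l, i ∈ E l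
  · obtain ⟨l, hl⟩ := hi
    rw [Finset.sum_eq_single l]
    · simp [hl]
    · intro b _ hb
      rw [if_neg]
      intro hb'
      exact hb (h.unique hb' hl)
    · simp
  · push Not at hi
    simp [hi]

lemma abs_le_tsl1 (x : ℕ+ →₀ ℝ) (i : ℕ+) : |x i| ≤ tsl1 x := by
  by_cases h : i ∈ x.support
  · exact Finset.single_le_sum (f := fun i => |x i|) (fun _ _ => abs_nonneg _) h
  · rw [Finsupp.notMem_support_iff] at h
    rw [h, abs_zero]; exact tsl1_nonneg x

variable {θ : ℝ} {S : Set (Finset ℕ+)}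

lemma bdd_abs (x : ℕ+ →₀ ℝ) : BddAbove (Set.range fun i => |x i|) :=
  ⟨tsl1 x, by rintro _ ⟨i, rfl⟩; exact abs_le_tsl1 x i⟩

lemma aux_bounds (h0 : 0 < θ) (h1 : θ ≤ 1) (m : ℕ) :
    ∀ x, 0 ≤ tnormAux θ S m x ∧ tnormAux θ S m x ≤ tsl1 x := by
  induction m with
  | zero =>
    intro x
    refine ⟨Real.iSup_nonneg fun _ => abs_nonneg _, ciSup_le fun i => abs_le_tsl1 x i⟩
  | succ m ih =>
    intro x
    simp only [tnormAux]
    refine ⟨le_max_of_le_left (ih x).1, max_le (ih x).2 ?_⟩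
    refine Real.sSup_le ?_ (tsl1_nonneg x)
    rintro r ⟨d, E, hE, rfl⟩
    have h2 : ∑ i, tnormAux θ S m (tsProj (E i) x) ≤ tsl1 x :=
      (Finset.sum_le_sum fun i _ => (ih _).2).trans (sum_tsl1_le hE.2.1 x)
    have h3 : 0 ≤ ∑ i, tnormAux θ S m (tsProj (E i) x) := Finset.sum_nonneg fun i _ => (ih _).1
    nlinarith

lemma aux_bdd (h0 : 0 < θ) (h1 : θ ≤ 1) (m : ℕ) (x : ℕ+ →₀ ℝ) :
    BddAbove {r : ℝ | ∃ (d : ℕ) (E : Fin d → Finset ℕ+), TsAdmissible S E ∧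
          r = θ * ∑ i, tnormAux θ S m (tsProj (E i) x)} := by
  refine ⟨tsl1 x, ?_⟩
  rintro r ⟨d, E, hE, rfl⟩
  have h2 : ∑ i, tnormAux θ S m (tsProj (E i) x) ≤ tsl1 x :=
    (Finset.sum_le_sum fun i _ => (aux_bounds h0 h1 m _).2).trans (sum_tsl1_le hE.2.1 x)
  have h3 : 0 ≤ ∑ i, tnormAux θ S m (tsProj (E i) x) :=
    Finset.sum_nonneg fun i _ => (aux_bounds h0 h1 m _).1
  nlinarith

lemma aux_le_succ (m : ℕ) (x : ℕ+ →₀ ℝ) : tnormAux θ S m x ≤ tnormAux θ S (m + 1) x := by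
  simp only [tnormAux]; exact le_max_left _ _

lemma aux_mono (x : ℕ+ →₀ ℝ) : Monotone fun m => tnormAux θ S m x :=
  monotone_nat_of_le_succ fun m => aux_le_succ m x

lemma tnorm_bdd (h0 : 0 < θ) (h1 : θ ≤ 1) (x : ℕ+ →₀ ℝ) :
    BddAbove (Set.range fun m => tnormAux θ S m x) :=
  ⟨tsl1 x, by rintro _ ⟨i, rfl⟩; exact (aux_bounds h0 h1 i x).2⟩

lemma aux_le_tnorm (h0 : 0 < θ) (h1 : θ ≤ 1) (m : ℕ) (x : ℕ+ →₀ ℝ) :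
    tnormAux θ S m x ≤ tnorm θ S x := le_ciSup (tnorm_bdd h0 h1 x) m

lemma tnorm_nonneg (h0 : 0 < θ) (h1 : θ ≤ 1) (x : ℕ+ →₀ ℝ) : 0 ≤ tnorm θ S x :=
  (aux_bounds h0 h1 0 x).1.trans (aux_le_tnorm h0 h1 0 x)

lemma tnorm_le_l1 (h0 : 0 < θ) (h1 : θ ≤ 1) (x : ℕ+ →₀ ℝ) : tnorm θ S x ≤ tsl1 x :=
  ciSup_le fun m => (aux_bounds h0 h1 m x).2

lemma abs_le_tnorm (h0 : 0 < θ) (h1 : θ ≤ 1) (x : ℕ+ →₀ ℝ) (i : ℕ+) : |x i| ≤ tnorm θ S x :=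
  (le_ciSup (bdd_abs x) i).trans (aux_le_tnorm (S := S) h0 h1 0 x)

lemma tsProj_comm (E F : Finset ℕ+) (x : ℕ+ →₀ ℝ) :
    tsProj E (tsProj F x) = tsProj F (tsProj E x) := by
  ext i; simp only [tsProj_apply]; split_ifs <;> rfl

lemma aux_proj_le (h0 : 0 < θ) (h1 : θ ≤ 1) (F : Finset ℕ+) (m : ℕ) :
    ∀ x, tnormAux θ S m (tsProj F x) ≤ tnormAux θ S m x := by
  induction m with
  | zero =>
    intro x
    exact ciSup_mono (bdd_abs x) fun i => abs_tsProj_le F x i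
  | succ m ih =>
    intro x
    have hn : 0 ≤ tnormAux θ S (m+1) x := (aux_bounds h0 h1 _ x).1
    simp only [tnormAux] at hn ⊢
    refine max_le (le_max_of_le_left (ih x)) ?_
    refine Real.sSup_le ?_ hn
    rintro r ⟨d, E, hE, rfl⟩
    refine le_max_of_le_right ?_
    refine le_trans ?_ (le_csSup (aux_bdd h0 h1 m x) ⟨d, E, hE, rfl⟩)
    refine mul_le_mul_of_nonneg_left (Finset.sum_le_sum fun i _ => ?_) h0.le
    rw [tsProj_comm]; exact ih _

lemma tnorm_proj_le (h0 : 0 < θ) (h1 : θ ≤ 1) (F : Finset ℕ+) (x : ℕ+ →₀ ℝ) :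
    tnorm θ S (tsProj F x) ≤ tnorm θ S x :=
  ciSup_mono (tnorm_bdd h0 h1 x) fun m => aux_proj_le h0 h1 F m x

lemma tnorm_adm (h0 : 0 < θ) (h1 : θ ≤ 1) {d : ℕ} {E : Fin d → Finset ℕ+}
    (hE : TsAdmissible S E) (x : ℕ+ →₀ ℝ) :
    θ * ∑ i, tnorm θ S (tsProj (E i) x) ≤ tnorm θ S x := by
  have ht : ∀ y : ℕ+ →₀ ℝ, Filter.Tendsto (fun m => tnormAux θ S m y) Filter.atTop
      (nhds (tnorm θ S y)) := fun y => tendsto_atTop_ciSup (aux_mono y) (tnorm_bdd h0 h1 y)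
  refine le_of_tendsto ((tendsto_finsetSum Finset.univ
    fun i _ => ht (tsProj (E i) x)).const_mul θ) (Filter.Eventually.of_forall fun m => ?_)
  refine le_trans ?_ (aux_le_tnorm h0 h1 (m+1) x)
  simp only [tnormAux]
  exact le_max_of_le_right (le_csSup (aux_bdd h0 h1 m x) ⟨d, E, hE, rfl⟩)

lemma tnorm_le (h0 : 0 < θ) (h1 : θ ≤ 1) {x : ℕ+ →₀ ℝ} {B : ℝ} (hs : ∀ i, |x i| ≤ B)
    (hE : ∀ (d : ℕ) (E : Fin d → Finset ℕ+), TsAdmissible S E →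
      θ * ∑ i, tnorm θ S (tsProj (E i) x) ≤ B) : tnorm θ S x ≤ B := by
  refine ciSup_le fun m => ?_
  induction m with
  | zero => exact ciSup_le hs
  | succ m ih =>
    simp only [tnormAux]
    refine max_le ih (Real.sSup_le ?_ ((abs_nonneg _).trans (hs 1)))
    rintro r ⟨d, E, h, rfl⟩
    refine le_trans ?_ (hE d E h)
    exact mul_le_mul_of_nonneg_left
      (Finset.sum_le_sum fun i _ => aux_le_tnorm h0 h1 m _) h0.le

lemma tnorm_le_max (h0 : 0 < θ) (h1 : θ ≤ 1) {x : ℕ+ →₀ ℝ} {B : ℝ} (hs : ∀ i, |x i| ≤ B)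
    (hB : θ * tsl1 x ≤ B) : tnorm θ S x ≤ B := by
  refine tnorm_le h0 h1 hs fun d E hE => le_trans ?_ hB
  exact mul_le_mul_of_nonneg_left
    ((Finset.sum_le_sum fun i _ => tnorm_le_l1 h0 h1 _).trans (sum_tsl1_le hE.2.1 x)) h0.le

lemma adm_card {d : ℕ} {E : Fin d → Finset ℕ+} (hE : TsAdmissible (Schreier 1) E)
    {l : Fin d} {a : ℕ+} (ha : a ∈ E l) : d ≤ (a : ℕ) := by
  obtain ⟨hne, hs, μ, hμ, hS⟩ := hE
  have hinj : Function.Injective μ := by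
    intro i j hij
    have hi := (hμ i).1
    have hj := (hμ j).1
    rw [← hij] at hj
    exact TsSucc.unique hs hi hj
  have hc : (Finset.univ.image μ).card = d := by
    rw [Finset.card_image_of_injective _ hinj]; simp
  have h2 : ∀ a ∈ Finset.univ.image μ, (Finset.univ.image μ).card ≤ (a : ℕ) := by
    simpa [Schreier] using hS
  have h3 := h2 (μ l) (by simp)
  rw [hc] at h3
  have h4 : μ l ≤ a := (hμ l).2 ha
  exact h3.trans h4

lemma adm_of {d : ℕ} {E : Fin d → Finset ℕ+} (hne : ∀ i, (E i).Nonempty) (hs : TsSucc E)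
    (hd : ∀ l, ∀ a ∈ E l, d ≤ (a : ℕ)) : TsAdmissible (Schreier 1) E := by
  refine ⟨hne, hs, fun i => (E i).min' (hne i), fun i => ⟨Finset.min'_mem _ _,
    fun b hb => Finset.min'_le _ _ hb⟩, ?_⟩
  have : ∀ a ∈ Finset.univ.image (fun i => (E i).min' (hne i)),
    (Finset.univ.image (fun i => (E i).min' (hne i))).card ≤ (a : ℕ) := by
    intro a ha
    refine (Finset.card_image_le).trans ?_
    simp only [Finset.mem_image, Finset.mem_univ, true_and] at ha
    obtain ⟨l, rfl⟩ := ha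
    simpa using hd l _ (Finset.min'_mem _ (hne l))
  simpa [Schreier] using this

/-- the first `⌈1/θ⌉` vectors span `ℓ_∞`. -/
lemma tnorm_linf (h0 : 0 < θ) (h1 : θ ≤ 1) {N : ℕ} (hN : θ * ((N : ℝ) - 1) ≤ 1)
    {B : ℝ} {x : ℕ+ →₀ ℝ} (hs : ∀ i, |x i| ≤ B) (hx : ∀ i : ℕ+, N < (i : ℕ) → x i = 0) :
    tnorm θ (Schreier 1) x ≤ B := by
  refine ciSup_le fun m => ?_
  have hB : 0 ≤ B := (abs_nonneg _).trans (hs 1)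
  induction m generalizing x with
  | zero => exact ciSup_le hs
  | succ m ih =>
    simp only [tnormAux]
    refine max_le (ih hs hx) (Real.sSup_le ?_ hB)
    rintro r ⟨d, E, h, rfl⟩
    have hpiece : ∀ l, tnormAux θ (Schreier 1) m (tsProj (E l) x) ≤ B := fun l =>
      ih (fun i => (abs_tsProj_le _ _ _).trans (hs i)) (fun i hi => by
        rw [tsProj_apply, hx i hi]; simp)
    by_cases hd : d < N
    · have h2 : ∑ l, tnormAux θ (Schreier 1) m (tsProj (E l) x) ≤ d * B := by
        refine (Finset.sum_le_sum fun l _ => hpiece l).trans ?_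
        simp
      have h3 : (d : ℝ) ≤ N - 1 := by
        have : ((d + 1 : ℕ) : ℝ) ≤ N := by exact_mod_cast hd
        push_cast at this; linarith
      calc _ ≤ θ * (d * B) := mul_le_mul_of_nonneg_left h2 h0.le
        _ = (θ * d) * B := by ring
        _ ≤ 1 * B := mul_le_mul_of_nonneg_right
          ((mul_le_mul_of_nonneg_left h3 h0.le).trans hN) hB
        _ = B := one_mul B
    · push Not at hd
      have h2 : ∑ l, tnormAux θ (Schreier 1) m (tsProj (E l) x) ≤ B := by
        refine (Finset.sum_le_sum fun l _ => (aux_bounds h0 h1 m _).2).trans ?_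
        simp_rw [tsl1_tsProj]
        rw [Finset.sum_comm]
        by_cases hN0 : 0 < N
        · obtain ⟨N', hN'⟩ : ∃ N' : ℕ+, (N' : ℕ) = N := ⟨⟨N, hN0⟩, rfl⟩
          refine le_trans (b := ∑ i ∈ x.support, if i = N' then |x i| else 0) ?_ ?_
          · refine Finset.sum_le_sum fun i hi => ?_
            by_cases hi' : ∃ l, i ∈ E l
            · obtain ⟨l, hl⟩ := hi'
              have h5 := adm_card h hl
              have h6 : ¬ N < (i : ℕ) := fun h => (Finsupp.mem_support_iff.1 hi) (hx i h)
              have h7 : i = N' := by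
                apply PNat.eq; omega
              rw [if_pos h7, Finset.sum_eq_single l]
              · simp [hl]
              · intro b _ hb
                rw [if_neg]
                intro hb'
                exact hb (TsSucc.unique h.2.1 hb' hl)
              · simp
            · push Not at hi'
              simp only [hi', if_false, Finset.sum_const_zero]
              split_ifs <;> simp
          · rw [Finset.sum_ite_eq']
            split_ifs
            · exact hs _
            · exact hB
        · have : x.support = ∅ := by
            ext i
            have := hx i (by have := i.pos; omega)
            simp [this]
          simp [this, hB]
      have h3 : 0 ≤ ∑ l, tnormAux θ (Schreier 1) m (tsProj (E l) x) :=
        Finset.sum_nonneg fun i _ => (aux_bounds h0 h1 m _).1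
      nlinarith

lemma seq_lemma {α : Type*} (R : ℕ+ → ℕ+ → α → Prop)
    (h : ∀ K, ∃ K' a, K < K' ∧ R K K' a) (K0 : ℕ+) :
    ∃ (K : ℕ → ℕ+) (a : ℕ → α), K 0 = K0 ∧ StrictMono K ∧ ∀ k, R (K k) (K (k+1)) (a k) := by
  choose g a hg hR using h
  refine ⟨fun k => g^[k] K0, fun k => a (g^[k] K0), rfl, ?_, ?_⟩
  · refine strictMono_nat_of_lt_succ fun k => ?_
    rw [Function.iterate_succ_apply']; exact hg _
  · intro k
    have := hR (g^[k] K0)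
    rw [← Function.iterate_succ_apply' g] at this
    exact this

end basics

section weaknull

variable {θ : ℝ} {X : Type*} [NormedAddCommGroup X] [NormedSpace ℝ X] {e : ℕ+ → X}

lemma norm_lc (hX : IsTsirelsonSpace θ 1 X e) (a : ℕ+ →₀ ℝ) :
    ‖Finsupp.linearCombination ℝ e a‖ = tnorm θ (Schreier 1) a := hX.norm_embed a

lemma tn_sum_le (hX : IsTsirelsonSpace θ 1 X e) {ι : Type*} (s : Finset ι) (b : ι → ℕ+ →₀ ℝ) :
    tnorm θ (Schreier 1) (∑ k ∈ s, b k) ≤ ∑ k ∈ s, tnorm θ (Schreier 1) (b k) := by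
  simp_rw [← norm_lc hX, map_sum]
  exact norm_sum_le _ _

lemma tn_smul (hX : IsTsirelsonSpace θ 1 X e) (c : ℝ) (b : ℕ+ →₀ ℝ) :
    tnorm θ (Schreier 1) (c • b) = |c| * tnorm θ (Schreier 1) b := by
  simp_rw [← norm_lc hX, map_smul, norm_smul, Real.norm_eq_abs]

lemma tsProj_avg (E : Finset ℕ+) (c : ℝ) (s : Finset ℕ) (b : ℕ → ℕ+ →₀ ℝ) :
    tsProj E (c • ∑ k ∈ s, b k) = c • ∑ k ∈ s, tsProj E (b k) := by
  ext i
  simp only [tsProj_apply, Finsupp.smul_apply, Finsupp.finsetSum_apply]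
  split_ifs <;> simp

lemma avg_bound (hX : IsTsirelsonSpace θ 1 X e) (h0 : 0 < θ) (h1 : θ ≤ 1)
    {d : ℕ} {E : Fin d → Finset ℕ+} (hE : TsSucc E)
    {b : ℕ → ℕ+ →₀ ℝ} (hb : ∀ k, tsl1 (b k) ≤ 1) {c : ℝ} (hc : 0 ≤ c) {p : ℕ} (hp : 0 < p)
    {B : ℕ} (hB : ((Finset.range p).filter fun k =>
      c < ∑ l, tnorm θ (Schreier 1) (tsProj (E l) (b k))).card ≤ B) :
    ∑ l, tnorm θ (Schreier 1) (tsProj (E l) ((p : ℝ)⁻¹ • ∑ k ∈ Finset.range p, b k))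
      ≤ c + B / p := by
  have hp' : (0 : ℝ) < p := by exact_mod_cast hp
  have key : ∀ k, ∑ l, tnorm θ (Schreier 1) (tsProj (E l) (b k)) ≤
      c + if c < ∑ l, tnorm θ (Schreier 1) (tsProj (E l) (b k)) then 1 else 0 := by
    intro k
    split_ifs with h
    · have : ∑ l, tnorm θ (Schreier 1) (tsProj (E l) (b k)) ≤ 1 :=
        ((Finset.sum_le_sum fun l _ => tnorm_le_l1 h0 h1 _).trans (sum_tsl1_le hE _)).trans (hb k)
      linarith
    · push Not at h; simpa using h
  calc _ ≤ ∑ l, (p : ℝ)⁻¹ * ∑ k ∈ Finset.range p, tnorm θ (Schreier 1) (tsProj (E l) (b k)) := by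
        refine Finset.sum_le_sum fun l _ => ?_
        rw [tsProj_avg, tn_smul hX, abs_of_pos (inv_pos.2 hp')]
        exact mul_le_mul_of_nonneg_left (tn_sum_le hX _ _) (inv_pos.2 hp').le
    _ = (p : ℝ)⁻¹ * ∑ k ∈ Finset.range p, ∑ l, tnorm θ (Schreier 1) (tsProj (E l) (b k)) := by
        rw [← Finset.mul_sum, Finset.sum_comm]
    _ ≤ (p : ℝ)⁻¹ * (p * c + B) := by
        refine mul_le_mul_of_nonneg_left ?_ (inv_pos.2 hp').le
        refine (Finset.sum_le_sum fun k _ => key k).trans ?_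
        rw [Finset.sum_add_distrib, Finset.sum_boole]
        simp only [Finset.sum_const, Finset.card_range, nsmul_eq_mul]
        have : ((((Finset.range p).filter fun k =>
          c < ∑ l, tnorm θ (Schreier 1) (tsProj (E l) (b k))).card : ℕ) : ℝ) ≤ B := by
          exact_mod_cast hB
        linarith
    _ = c + B / p := by field_simp

def TsConv (A : Set ℕ+) (K K' : ℕ+) (a : ℕ+ →₀ ℝ) : Prop :=
  (∀ n, 0 ≤ a n) ∧ (∀ n, a n ≠ 0 → n ∈ A ∧ K < n ∧ n ≤ K') ∧
    Finsupp.linearCombination ℝ (fun _ : ℕ+ => (1 : ℝ)) a = 1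

lemma TsConv.l1 {A : Set ℕ+} {K K' : ℕ+} {a : ℕ+ →₀ ℝ} (h : TsConv A K K' a) : tsl1 a = 1 := by
  rw [← h.2.2, Finsupp.linearCombination_apply, Finsupp.sum, tsl1]
  refine Finset.sum_congr rfl fun i _ => ?_
  rw [abs_of_nonneg (h.1 i)]; simp

lemma conv_avg {A : Set ℕ+} {K : ℕ → ℕ+} (hK : StrictMono K) {b : ℕ → ℕ+ →₀ ℝ}
    (hb : ∀ k, TsConv A (K k) (K (k+1)) (b k)) {p : ℕ} (hp : 0 < p) :
    TsConv A (K 0) (K p) ((p : ℝ)⁻¹ • ∑ k ∈ Finset.range p, b k) := by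
  have hp' : (0 : ℝ) < p := by exact_mod_cast hp
  refine ⟨fun n => ?_, fun n hn => ?_, ?_⟩
  · simp only [Finsupp.smul_apply, Finsupp.finsetSum_apply, smul_eq_mul]
    exact mul_nonneg (inv_pos.2 hp').le (Finset.sum_nonneg fun k _ => (hb k).1 n)
  · simp only [Finsupp.smul_apply, Finsupp.finsetSum_apply, smul_eq_mul] at hn
    have h2 := right_ne_zero_of_mul hn
    obtain ⟨k, hk, hk2⟩ := Finset.exists_ne_zero_of_sum_ne_zero h2
    obtain ⟨h3, h4, h5⟩ := (hb k).2.1 n hk2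
    refine ⟨h3, lt_of_le_of_lt (hK.monotone (Nat.zero_le k)) h4, h5.trans (hK.monotone ?_)⟩
    have := Finset.mem_range.1 hk
    omega
  · rw [map_smul, map_sum, Finset.sum_congr rfl fun k _ => (hb k).2.2]
    simp [hp'.ne']

lemma tnorm_zero' (hX : IsTsirelsonSpace θ 1 X e) : tnorm θ (Schreier 1) 0 = 0 := by
  rw [← norm_lc hX]; simp

lemma tsProj_zero_of {E : Finset ℕ+} {b : ℕ+ →₀ ℝ} (h : ∀ n ∈ E, b n = 0) : tsProj E b = 0 := by
  ext i; rw [tsProj_apply]; split_ifs with hi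
  · simp [h i hi]
  · simp

lemma P_to_Q (hX : IsTsirelsonSpace θ 1 X e) (h0 : 0 < θ) (h1 : θ ≤ 1) {A : Set ℕ+} {c : ℝ}
    (hc : 0 ≤ c)
    (hP : ∀ K, ∃ K' a, K < K' ∧ TsConv A K K' a ∧ tnorm θ (Schreier 1) a ≤ c)
    {η : ℝ} (hη : 0 < η) (D : ℕ) (K0 : ℕ+) :
    ∃ K' a, K0 < K' ∧ TsConv A K0 K' a ∧ ∀ (d : ℕ) (E : Fin d → Finset ℕ+), d ≤ D → TsSucc E →
      ∑ l, tnorm θ (Schreier 1) (tsProj (E l) a) ≤ c + η := by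
  obtain ⟨K, b, hK0, hK, hb⟩ := seq_lemma
    (fun K K' a => TsConv A K K' a ∧ tnorm θ (Schreier 1) a ≤ c) hP K0
  obtain ⟨p, hp⟩ := exists_nat_gt (max (D / η) 0)
  have hp0 : (0:ℝ) < p := lt_of_le_of_lt (le_max_right _ _) hp
  have hpD : D / η < p := lt_of_le_of_lt (le_max_left _ _) hp
  have hp1 : 0 < p := by exact_mod_cast hp0
  refine ⟨K p, _, hK0 ▸ hK hp1, hK0 ▸ conv_avg hK (fun k => (hb k).1) hp1, ?_⟩
  intro d E hd hE
  refine (avg_bound hX h0 h1 hE (fun k => (hb k).1.l1.le) hc hp1 (B := d) ?_).trans ?_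
  · have := Finset.card_le_card_of_forall_subsingleton
      (s := (Finset.range p).filter fun k =>
        c < ∑ l, tnorm θ (Schreier 1) (tsProj (E l) (b k)))
      (t := (Finset.univ : Finset (Fin d)))
      (fun k l => ∃ l2, l < l2 ∧ (∃ n ∈ E l, b k n ≠ 0) ∧ (∃ n ∈ E l2, b k n ≠ 0)) ?_ ?_
    · simpa using this
    · intro k hk
      rw [Finset.mem_filter] at hk
      by_contra hcon
      refine not_le.2 hk.2 ?_
      have hz : ∀ l l2 : Fin d, l ≠ l2 → (∃ n ∈ E l, b k n ≠ 0) → ∀ n ∈ E l2, b k n = 0 := by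
        intro l l2 hne hl n hn
        by_contra hn'
        rcases lt_or_gt_of_ne hne with h | h
        · exact hcon ⟨l, Finset.mem_univ _, l2, h, hl, n, hn, hn'⟩
        · exact hcon ⟨l2, Finset.mem_univ _, l, h, ⟨n, hn, hn'⟩, hl⟩
      by_cases hl : ∃ l, ∃ n ∈ E l, b k n ≠ 0
      · obtain ⟨l, hl⟩ := hl
        rw [Finset.sum_eq_single l]
        · exact (tnorm_proj_le h0 h1 _ _).trans (hb k).2
        · intro l2 _ hne
          rw [tsProj_zero_of (hz l l2 hne.symm hl), tnorm_zero' hX]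
        · simp
      · push Not at hl
        rw [Finset.sum_eq_zero]
        · exact hc
        · intro l _
          rw [tsProj_zero_of (hl l), tnorm_zero' hX]
    · have aux : ∀ (l : Fin d) (k k' : ℕ), k < k' →
          (∃ l2, l < l2 ∧ (∃ n ∈ E l, b k n ≠ 0) ∧ (∃ n ∈ E l2, b k n ≠ 0)) →
          (∃ l2, l < l2 ∧ (∃ n ∈ E l, b k' n ≠ 0) ∧ (∃ n ∈ E l2, b k' n ≠ 0)) → False := by
        rintro l k k' hkk ⟨l2, hl2, -, n2, hn2, hb2⟩ ⟨-, -, ⟨n, hn, hbn⟩, -⟩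
        have h3 := hE l l2 hl2 n hn n2 hn2
        have h4 := ((hb k).1.2.1 n2 hb2).2.2
        have h5 := ((hb k').1.2.1 n hbn).2.1
        have h6 : K (k+1) ≤ K k' := hK.monotone hkk
        exact absurd (h4.trans (h6.trans h5.le)) (not_le.2 h3)
      rintro l - k ⟨-, hk⟩ k' ⟨-, hk'⟩
      rcases lt_trichotomy k k' with h | h | h
      · exact (aux l k k' h hk hk').elim
      · exact h
      · exact (aux l k' k h hk' hk).elim
  · have h3 : (d : ℝ) ≤ D := by exact_mod_cast hd
    rw [div_lt_iff₀ hη] at hpD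
    have : (d : ℝ) / p ≤ η := by
      rw [div_le_iff₀ hp0]; linarith
    linarith

lemma Q_to_P (hX : IsTsirelsonSpace θ 1 X e) (h0 : 0 < θ) (h1 : θ ≤ 1) {A : Set ℕ+} {c : ℝ}
    (hc : 0 ≤ c)
    (hQ : ∀ (D : ℕ) (K0 : ℕ+), ∃ K' a, K0 < K' ∧ TsConv A K0 K' a ∧
      ∀ (d : ℕ) (E : Fin d → Finset ℕ+), d ≤ D → TsSucc E →
      ∑ l, tnorm θ (Schreier 1) (tsProj (E l) a) ≤ c)
    {η : ℝ} (hη : 0 < η) (K0 : ℕ+) :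
    ∃ K' a, K0 < K' ∧ TsConv A K0 K' a ∧ tnorm θ (Schreier 1) a ≤ θ * c + η := by
  obtain ⟨K, b, hK0, hK, hb⟩ := seq_lemma
    (fun K K' a => TsConv A K K' a ∧ ∀ (d : ℕ) (E : Fin d → Finset ℕ+), d ≤ (K : ℕ) → TsSucc E →
      ∑ l, tnorm θ (Schreier 1) (tsProj (E l) a) ≤ c) (fun K => hQ K K) K0
  obtain ⟨p, hp⟩ := exists_nat_gt (max (1 / η) 0)
  have hp0 : (0:ℝ) < p := lt_of_le_of_lt (le_max_right _ _) hp
  have hpD : 1 / η < p := lt_of_le_of_lt (le_max_left _ _) hp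
  have hp1 : 0 < p := by exact_mod_cast hp0
  have hpη : 1 / (p : ℝ) ≤ η := by
    rw [div_lt_iff₀ hη] at hpD
    rw [div_le_iff₀ hp0]; linarith
  have hca := conv_avg hK (fun k => (hb k).1) hp1
  refine ⟨K p, _, hK0 ▸ hK hp1, hK0 ▸ hca, ?_⟩
  have hθc : 0 ≤ θ * c := mul_nonneg h0.le hc
  have huniq : ∀ k k' n n', k < k' → b k n ≠ 0 → b k' n' ≠ 0 → n ≤ K k' ∧ K k' < n' := by
    intro k k' n n' hkk hn hn'
    have h4 := ((hb k).1.2.1 n hn).2.2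
    have h5 := ((hb k').1.2.1 n' hn').2.1
    exact ⟨h4.trans (hK.monotone hkk), h5⟩
  refine tnorm_le h0 h1 (fun n => ?_) (fun d E hE => ?_)
  · rw [abs_of_nonneg (hca.1 n)]
    simp only [Finsupp.smul_apply, Finsupp.finsetSum_apply, smul_eq_mul]
    have : ∑ k ∈ Finset.range p, b k n ≤ 1 := by
      by_cases hk : ∃ k ∈ Finset.range p, b k n ≠ 0
      · obtain ⟨k, hk, hkn⟩ := hk
        rw [Finset.sum_eq_single k]
        · exact (le_abs_self _).trans ((abs_le_tsl1 _ _).trans (hb k).1.l1.le)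
        · intro k' _ hne
          by_contra h
          rcases lt_or_gt_of_ne hne with h2 | h2
          · have := huniq k' k n n h2 h hkn
            exact absurd this.1 (not_le.2 this.2)
          · have := huniq k k' n n h2 hkn h
            exact absurd this.1 (not_le.2 this.2)
        · intro h; exact absurd hk h
      · push Not at hk
        rw [Finset.sum_eq_zero hk]; exact zero_le_one
    have h5 : (p : ℝ)⁻¹ * ∑ k ∈ Finset.range p, b k n ≤ (p : ℝ)⁻¹ * 1 :=
      mul_le_mul_of_nonneg_left this (inv_pos.2 hp0).le
    rw [mul_one] at h5
    rw [one_div] at hpη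
    linarith
  · have h2 := avg_bound hX h0 h1 (E := E) hE.2.1 (fun k => (hb k).1.l1.le) hc hp1 (B := 1) ?_
    · have h3 := mul_le_mul_of_nonneg_left h2 h0.le
      refine h3.trans ?_
      have h4 : (0:ℝ) < 1 / p := by positivity
      push_cast
      nlinarith
    · rw [Finset.card_le_one]
      have hmeet : ∀ k, c < ∑ l, tnorm θ (Schreier 1) (tsProj (E l) (b k)) →
          ∃ l, ∃ n ∈ E l, b k n ≠ 0 := by
        intro k hk
        by_contra hcon
        push Not at hcon
        refine not_le.2 hk ?_
        rw [Finset.sum_eq_zero]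
        · exact hc
        · intro l _
          rw [tsProj_zero_of (hcon l), tnorm_zero' hX]
      have aux : ∀ k k', k < k' → c < ∑ l, tnorm θ (Schreier 1) (tsProj (E l) (b k)) →
          c < ∑ l, tnorm θ (Schreier 1) (tsProj (E l) (b k')) → False := by
        intro k k' hkk hk hk'
        obtain ⟨l, n, hn, hbn⟩ := hmeet k hk
        obtain ⟨l', n', hn', hbn'⟩ := hmeet k' hk'
        have h5 := adm_card hE hn
        have h6 := (huniq k k' n n' hkk hbn hbn').1
        have h7 : (n : ℕ) ≤ (K k' : ℕ) := h6
        exact not_le.2 hk' ((hb k').2 d E (h5.trans h7) hE.2.1)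
      intro k hk k' hk'
      rw [Finset.mem_filter] at hk hk'
      rcases lt_trichotomy k k' with h | h | h
      · exact (aux k k' h hk.2 hk'.2).elim
      · exact h
      · exact (aux k' k h hk'.2 hk.2).elim

lemma P_all (hX : IsTsirelsonSpace θ 1 X e) (h0 : 0 < θ) (hθ : θ ≤ 1/2) {A : Set ℕ+}
    (hA : A.Infinite) (j : ℕ) :
    ∀ K, ∃ K' a, K < K' ∧ TsConv A K K' a ∧ tnorm θ (Schreier 1) a ≤ (3/4 : ℝ)^j := by
  have h1 : θ ≤ 1 := by linarith
  induction j with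
  | zero =>
    intro K
    obtain ⟨n, hn, hKn⟩ := hA.exists_gt K
    refine ⟨n, Finsupp.single n 1, hKn, ?_, ?_⟩
    · refine ⟨fun m => ?_, fun m hm => ?_, by simp⟩
      · rw [Finsupp.single_apply]; split_ifs <;> norm_num
      · rw [Finsupp.single_apply] at hm
        have : n = m := by by_contra h; simp [h] at hm
        subst this
        exact ⟨hn, hKn, le_rfl⟩
    · refine (tnorm_le_l1 h0 h1 _).trans ?_
      rw [tsl1, Finsupp.support_single_ne_zero _ one_ne_zero]; simp
  | succ j ih =>
    intro K
    have hc : (0:ℝ) < (3/4)^j := by positivity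
    obtain ⟨K', a, h2, h3, h4⟩ := Q_to_P hX h0 h1 (A := A) (c := (3/4)^j + (3/4)^j/4) (by positivity)
      (fun D K0 => P_to_Q hX h0 h1 hc.le ih (by positivity) D K0) (η := (3/4)^j/8) (by positivity) K
    refine ⟨K', a, h2, h3, h4.trans ?_⟩
    rw [pow_succ]
    nlinarith

lemma finite_ge (hX : IsTsirelsonSpace θ 1 X e) (h0 : 0 < θ) (hθ : θ ≤ 1/2) (f : X →L[ℝ] ℝ)
    {η : ℝ} (hη : 0 < η) : {n | η ≤ f (e n)}.Finite := by
  by_contra hA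
  obtain ⟨j, hj⟩ := exists_pow_lt_of_lt_one (show 0 < η / (‖f‖ + 1) by positivity)
    (show (3/4 : ℝ) < 1 by norm_num)
  obtain ⟨K', a, -, ha, hn⟩ := P_all hX h0 hθ (A := {n | η ≤ f (e n)}) hA j 1
  have h2 : η ≤ f (Finsupp.linearCombination ℝ e a) := by
    have h3 := ha.2.2
    rw [Finsupp.linearCombination_apply, Finsupp.sum] at h3 ⊢
    rw [map_sum]
    calc η = η * ∑ i ∈ a.support, a i • (1:ℝ) := by rw [h3, mul_one]
      _ = ∑ i ∈ a.support, η * a i := by rw [Finset.mul_sum]; simp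
      _ ≤ _ := by
        refine Finset.sum_le_sum fun i hi => ?_
        rw [map_smul, smul_eq_mul, mul_comm]
        exact mul_le_mul_of_nonneg_left (ha.2.1 i (Finsupp.mem_support_iff.1 hi)).1 (ha.1 i)
  have h3 := (le_abs_self _).trans (f.le_opNorm (Finsupp.linearCombination ℝ e a))
  rw [norm_lc hX] at h3
  rw [lt_div_iff₀ (by positivity)] at hj
  have h4 : 0 ≤ ‖f‖ := norm_nonneg f
  have h5 : (0:ℝ) < (3/4)^j := by positivity
  nlinarith

lemma finite_abs_ge (hX : IsTsirelsonSpace θ 1 X e) (h0 : 0 < θ) (hθ : θ ≤ 1/2) (f : X →L[ℝ] ℝ)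
    {η : ℝ} (hη : 0 < η) : {n | η ≤ |f (e n)|}.Finite := by
  refine ((finite_ge hX h0 hθ f hη).union (finite_ge hX h0 hθ (-f) hη)).subset ?_
  intro n hn
  have hn' : η ≤ |f (e n)| := hn
  exact le_abs.1 hn'

end weaknull

section coords

variable {θ : ℝ} {X : Type*} [NormedAddCommGroup X] [NormedSpace ℝ X] {e : ℕ+ → X}

def tsCoord (hX : IsTsirelsonSpace θ 1 X e) (x : X) : ℕ+ → ℝ := (hX.expansion x).choose

lemma coord_hasSum (hX : IsTsirelsonSpace θ 1 X e) (x : X) :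
    HasSum (fun i => tsCoord hX x i • e i) x := (hX.expansion x).choose_spec.1

lemma coord_unique (hX : IsTsirelsonSpace θ 1 X e) {x : X} {a : ℕ+ → ℝ}
    (h : HasSum (fun i => a i • e i) x) : tsCoord hX x = a :=
  ((hX.expansion x).choose_spec.2 a h).symm

lemma coord_add (hX : IsTsirelsonSpace θ 1 X e) (x y : X) (r : ℕ+) :
    tsCoord hX (x + y) r = tsCoord hX x r + tsCoord hX y r := by
  have := (coord_hasSum hX x).add (coord_hasSum hX y)
  simp_rw [← add_smul] at this
  rw [coord_unique hX this]

lemma coord_smul (hX : IsTsirelsonSpace θ 1 X e) (c : ℝ) (x : X) (r : ℕ+) :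
    tsCoord hX (c • x) r = c * tsCoord hX x r := by
  have := (coord_hasSum hX x).const_smul c
  simp_rw [smul_smul] at this
  rw [coord_unique hX this]

def tsRes (hX : IsTsirelsonSpace θ 1 X e) (E : Finset ℕ+) (x : X) : ℕ+ →₀ ℝ :=
  ∑ i ∈ E, Finsupp.single i (tsCoord hX x i)

lemma tsRes_apply (hX : IsTsirelsonSpace θ 1 X e) (E : Finset ℕ+) (x : X) (i : ℕ+) :
    tsRes hX E x i = if i ∈ E then tsCoord hX x i else 0 := by
  simp [tsRes, Finsupp.finsetSum_apply, Finsupp.single_apply]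

lemma lc_tsRes (hX : IsTsirelsonSpace θ 1 X e) (E : Finset ℕ+) (x : X) :
    Finsupp.linearCombination ℝ e (tsRes hX E x) = ∑ i ∈ E, tsCoord hX x i • e i := by
  simp [tsRes, map_sum]

lemma tn_res_le (hX : IsTsirelsonSpace θ 1 X e) (h0 : 0 < θ) (h1 : θ ≤ 1) (E : Finset ℕ+) (x : X) :
    tnorm θ (Schreier 1) (tsRes hX E x) ≤ ‖x‖ := by
  refine ge_of_tendsto (coord_hasSum hX x).norm ?_
  filter_upwards [Filter.eventually_ge_atTop E] with s hs
  rw [← lc_tsRes hX, norm_lc hX]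
  have : tsRes hX E x = tsProj E (tsRes hX s x) := by
    ext i
    rw [tsProj_apply, tsRes_apply, tsRes_apply]
    split_ifs with h h2
    · rfl
    · exact absurd (hs h) h2
    · rfl
  rw [this]
  exact tnorm_proj_le h0 h1 _ _

lemma abs_coord_le (hX : IsTsirelsonSpace θ 1 X e) (h0 : 0 < θ) (h1 : θ ≤ 1) (x : X) (r : ℕ+) :
    |tsCoord hX x r| ≤ ‖x‖ := by
  have := (abs_le_tnorm (S := Schreier 1) h0 h1 (tsRes hX {r} x) r).trans (tn_res_le hX h0 h1 {r} x)
  simpa [tsRes_apply] using this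

def coordU (hX : IsTsirelsonSpace θ 1 X e) (h0 : 0 < θ) (h1 : θ ≤ 1) (U : X →ₗᵢ[ℝ] X) (r : ℕ+) :
    X →L[ℝ] ℝ :=
  LinearMap.mkContinuous
    { toFun := fun x => tsCoord hX (U x) r
      map_add' := fun x y => by rw [map_add, coord_add]
      map_smul' := fun c x => by rw [map_smul, coord_smul]; rfl } 1
    (fun x => by
      have := abs_coord_le hX h0 h1 (U x) r
      rw [U.norm_map] at this
      simpa using this)

lemma coordU_apply (hX : IsTsirelsonSpace θ 1 X e) (h0 : 0 < θ) (h1 : θ ≤ 1) (U : X →ₗᵢ[ℝ] X)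
    (r : ℕ+) (x : X) : coordU hX h0 h1 U r x = tsCoord hX (U x) r := rfl

lemma norm_e (hX : IsTsirelsonSpace θ 1 X e) (h0 : 0 < θ) (h1 : θ ≤ 1) (i : ℕ+) : ‖e i‖ = 1 := by
  have h2 : ‖e i‖ = tnorm θ (Schreier 1) (Finsupp.single i 1) := by
    rw [← norm_lc hX]; simp
  rw [h2]
  apply le_antisymm
  · refine (tnorm_le_l1 h0 h1 _).trans ?_
    rw [tsl1, Finsupp.support_single_ne_zero _ one_ne_zero]; simp
  · have := abs_le_tnorm (S := Schreier 1) h0 h1 (Finsupp.single i (1:ℝ)) i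
    simpa using this

lemma approx (hX : IsTsirelsonSpace θ 1 X e) (x : X) {η : ℝ} (hη : 0 < η) (K : ℕ+) :
    ∃ K', K ≤ K' ∧ ‖x - ∑ i ∈ Finset.Icc 1 K', tsCoord hX x i • e i‖ < η := by
  have h := (coord_hasSum hX x).eventually (Metric.ball_mem_nhds x hη)
  obtain ⟨s, hs⟩ := Filter.eventually_atTop.1 h
  refine ⟨max K (s.sup id), le_max_left _ _, ?_⟩
  have := hs (Finset.Icc 1 (max K (s.sup id))) (fun i hi => by
    rw [Finset.mem_Icc]
    exact ⟨one_le, le_max_of_le_right (Finset.le_sup (f := id) hi)⟩)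
  rwa [dist_comm, dist_eq_norm] at this

lemma far (hX : IsTsirelsonSpace θ 1 X e) (h0 : 0 < θ) (hθ : θ ≤ 1/2) (U : X →ₗᵢ[ℝ] X)
    {η : ℝ} (hη : 0 < η) (K : ℕ+) :
    ∃ K' n, K < K' ∧ (K < n ∧
      ‖U (e n) - ∑ i ∈ Finset.Ioc K K', tsCoord hX (U (e n)) i • e i‖ < η ∧ n ≤ K') := by
  have h1 : θ ≤ 1 := by linarith
  have hKpos : (0:ℝ) < (K : ℕ) := by exact_mod_cast K.pos
  have hfin : (⋃ r ∈ Finset.Icc 1 K, {n | η / (2 * (K : ℕ)) ≤ |coordU hX h0 h1 U r (e n)|}).Finite :=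
    Set.Finite.biUnion (Finset.finite_toSet _)
      fun r _ => finite_abs_ge hX h0 hθ _ (by positivity)
  have hinf : ((⋃ r ∈ Finset.Icc 1 K,
      {n | η / (2 * (K : ℕ)) ≤ |coordU hX h0 h1 U r (e n)|})ᶜ).Infinite :=
    hfin.infinite_compl
  obtain ⟨n, hn, hKn⟩ := hinf.exists_gt K
  obtain ⟨K', hK', hlt⟩ := approx hX (U (e n)) (half_pos hη) n
  refine ⟨K', n, hKn.trans_le hK', hKn, ?_, hK'⟩
  have hsmall : ‖∑ i ∈ Finset.Icc 1 K, tsCoord hX (U (e n)) i • e i‖ ≤ η / 2 := by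
    refine (norm_sum_le _ _).trans ?_
    have : ∀ i ∈ Finset.Icc 1 K, ‖tsCoord hX (U (e n)) i • e i‖ ≤ η / (2 * (K : ℕ)) := by
      intro i hi
      rw [norm_smul, norm_e hX h0 h1, mul_one, Real.norm_eq_abs]
      by_contra hcon
      push Not at hcon
      apply hn
      simp only [Set.mem_iUnion]
      exact ⟨i, hi, hcon.le⟩
    refine (Finset.sum_le_sum this).trans ?_
    rw [Finset.sum_const, PNat.card_Icc, nsmul_eq_mul]
    apply le_of_eq
    simp
    field_simp
  have hun : Finset.Icc 1 K' = Finset.Icc 1 K ∪ Finset.Ioc K K' := by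
    ext i
    simp only [Finset.mem_Icc, Finset.mem_union, Finset.mem_Ioc, one_le, true_and]
    constructor
    · intro h
      rcases le_or_gt i K with h2 | h2
      · exact Or.inl h2
      · exact Or.inr ⟨h2, h⟩
    · rintro (h | h)
      · exact h.trans (hKn.trans_le hK').le
      · exact h.2
  have hdis : Disjoint (Finset.Icc 1 K) (Finset.Ioc K K') := by
    rw [Finset.disjoint_left]
    intro i hi hi'
    rw [Finset.mem_Icc] at hi
    rw [Finset.mem_Ioc] at hi'
    exact absurd hi.2 (not_le.2 hi'.1)
  rw [hun, Finset.sum_union hdis] at hlt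
  calc _ = ‖(U (e n) - (∑ i ∈ Finset.Icc 1 K, tsCoord hX (U (e n)) i • e i +
          ∑ i ∈ Finset.Ioc K K', tsCoord hX (U (e n)) i • e i)) +
          ∑ i ∈ Finset.Icc 1 K, tsCoord hX (U (e n)) i • e i‖ := by congr 1; abel
    _ ≤ _ := norm_add_le _ _
    _ < η := by linarith

lemma ind_apply (G : Finset ℕ+) (k : ℕ+) :
    (∑ g ∈ G, Finsupp.single g (1:ℝ)) k = if k ∈ G then 1 else 0 := by
  simp [Finsupp.finsetSum_apply, Finsupp.single_apply]

lemma ind_support (G : Finset ℕ+) :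
    (∑ g ∈ G, Finsupp.single g (1:ℝ)).support = G := by
  ext k; rw [Finsupp.mem_support_iff, ind_apply]; simp

lemma ind_l1 (G : Finset ℕ+) : tsl1 (∑ g ∈ G, Finsupp.single g (1:ℝ)) = G.card := by
  rw [tsl1, ind_support, Finset.card_eq_sum_ones]
  rw [Nat.cast_sum]
  refine Finset.sum_congr rfl fun i hi => ?_
  rw [ind_apply, if_pos hi, abs_one, Nat.cast_one]

lemma ind_le (h0 : 0 < θ) (hθ : θ ≤ 1/2) {G : Finset ℕ+} {i : ℕ+}
    (hi : i ∈ G) {m : ℕ} (hG : G.card = m + 1) (him : (i : ℕ) ≤ m) (hm : 1 ≤ θ * m) :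
    tnorm θ (Schreier 1) (∑ g ∈ G, Finsupp.single g (1:ℝ)) ≤ θ * m := by
  have h1 : θ ≤ 1 := by linarith
  set v := ∑ g ∈ G, Finsupp.single g (1:ℝ) with hv
  have hv1 : ∀ k, |v k| ≤ 1 := by
    intro k; rw [hv, ind_apply]; split_ifs <;> simp
  have hvl : tsl1 v = m + 1 := by rw [hv, ind_l1, hG]; push_cast; rfl
  refine tnorm_le h0 h1 (fun k => (hv1 k).trans hm) fun d E hE => ?_
  refine mul_le_mul_of_nonneg_left ?_ h0.le
  by_cases hmeet : ∃ l, i ∈ E l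
  · obtain ⟨l, hl⟩ := hmeet
    have hd : d ≤ m := (adm_card hE hl).trans him
    have hd' : (d : ℝ) ≤ m := by exact_mod_cast hd
    by_cases hbig : ∃ l0, 1 < tnorm θ (Schreier 1) (tsProj (E l0) v)
    · obtain ⟨l0, hl0⟩ := hbig
      have h3 : tnorm θ (Schreier 1) (tsProj (E l0) v) ≤ max 1 (θ * tsl1 (tsProj (E l0) v)) :=
        tnorm_le_max h0 h1 (fun k => le_max_of_le_left ((abs_tsProj_le _ _ _).trans (hv1 k)))
          (le_max_right _ _)
      have h4 : tnorm θ (Schreier 1) (tsProj (E l0) v) ≤ θ * tsl1 (tsProj (E l0) v) := by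
        rcases le_max_iff.1 h3 with h | h
        · linarith
        · exact h
      have h5 : 0 ≤ tsl1 (tsProj (E l0) v) := tsl1_nonneg _
      have h6 : tnorm θ (Schreier 1) (tsProj (E l0) v) ≤ tsl1 (tsProj (E l0) v) - 1 := by
        nlinarith
      have h7 : ∀ l, tnorm θ (Schreier 1) (tsProj (E l) v) ≤ tsl1 (tsProj (E l) v) -
          if l = l0 then 1 else 0 := by
        intro l
        split_ifs with h
        · rw [h]; exact h6
        · rw [sub_zero]; exact tnorm_le_l1 h0 h1 _
      refine (Finset.sum_le_sum fun l _ => h7 l).trans ?_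
      rw [Finset.sum_sub_distrib, Finset.sum_ite_eq', if_pos (Finset.mem_univ _)]
      have := sum_tsl1_le hE.2.1 v
      linarith
    · push Not at hbig
      refine (Finset.sum_le_sum fun l _ => hbig l).trans ?_
      simpa using hd
  · push Not at hmeet
    have h2 : ∀ l, tsProj (E l) v = tsProj (E l) (∑ g ∈ G.erase i, Finsupp.single g (1:ℝ)) := by
      intro l
      ext k
      rw [tsProj_apply, tsProj_apply, hv, ind_apply, ind_apply]
      by_cases hk : k ∈ E l
      · have : k ≠ i := fun h => hmeet l (h ▸ hk)
        simp [this]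
      · simp [hk]
    simp_rw [h2]
    refine (Finset.sum_le_sum fun l _ => tnorm_le_l1 h0 h1 _).trans
      ((sum_tsl1_le hE.2.1 _).trans ?_)
    rw [ind_l1, Finset.card_erase_of_mem hi, hG]
    simp

lemma triangular (hX : IsTsirelsonSpace θ 1 X e) (h0 : 0 < θ) (hθ : θ ≤ 1/2) (U : X →ₗᵢ[ℝ] X)
    {i r : ℕ+} {m : ℕ} (him : (i : ℕ) ≤ m) (hm : 1 ≤ θ * m) (hr : m < (r : ℕ)) :
    tsCoord hX (U (e i)) r = 0 := by
  have h1 : θ ≤ 1 := by linarith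
  by_contra hδ
  have hδ0 : 0 < |tsCoord hX (U (e i)) r| := abs_pos.2 hδ
  set δ := |tsCoord hX (U (e i)) r| with hδdef
  -- choose η with (m+1) η + θ m η < θ δ
  obtain ⟨η, hη, hηs⟩ : ∃ η : ℝ, 0 < η ∧ (m + 1) * η + θ * m * η < θ * δ := by
    refine ⟨θ * δ / (2 * (m + 1 + θ * m)), by positivity, ?_⟩
    have : ((m : ℝ) + 1) * (θ * δ / (2 * (m + 1 + θ * m))) +
      θ * m * (θ * δ / (2 * (m + 1 + θ * m))) = θ * δ / 2 := by
      field_simp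
    rw [this]
    have : 0 < θ * δ := by positivity
    linarith
  obtain ⟨K0, hK0r, hK0⟩ := approx hX (U (e i)) hη r
  obtain ⟨K, n, hKz, hK, hn⟩ := seq_lemma (fun K K' n => K < n ∧
      ‖U (e n) - ∑ i ∈ Finset.Ioc K K', tsCoord hX (U (e n)) i • e i‖ < η ∧ n ≤ K')
      (far hX h0 hθ U hη) K0
  have hir : i < r := by
    have : (i : ℕ) < (r : ℕ) := by omega
    exact this
  have hnmono : StrictMono n := by
    refine strictMono_nat_of_lt_succ fun k => ?_
    exact (hn k).2.2.trans_lt (hn (k+1)).1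
  have hin : ∀ k, i < n k := fun k =>
    hir.trans_le (hK0r.trans (hKz ▸ (hK.monotone (Nat.zero_le k)).trans (hn k).1.le))
  -- the upper bound
  have hnotin : i ∉ (Finset.range m).image n := by
    intro h
    obtain ⟨k, -, hk⟩ := Finset.mem_image.1 h
    exact absurd hk (hin k).ne'
  have hup := ind_le h0 hθ (G := insert i ((Finset.range m).image n)) (i := i) (m := m)
    (Finset.mem_insert_self _ _) (by
      rw [Finset.card_insert_of_notMem hnotin, Finset.card_image_of_injective _ hnmono.injective,
        Finset.card_range]) him hm
  rw [← norm_lc hX, ← U.norm_map, map_sum, map_sum, Finset.sum_insert hnotin,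
    Finset.sum_image (fun a _ b _ h => hnmono.injective h)] at hup
  simp only [Finsupp.linearCombination_single, one_smul] at hup
  -- the approximating vector
  set z : ℕ+ →₀ ℝ := tsRes hX (Finset.Icc 1 K0) (U (e i)) +
    ∑ k ∈ Finset.range m, tsRes hX (Finset.Ioc (K k) (K (k+1))) (U (e (n k))) with hz
  have hznorm : tnorm θ (Schreier 1) z ≤ θ * m + (m + 1) * η := by
    rw [← norm_lc hX, hz, map_add, map_sum]
    simp_rw [lc_tsRes]
    have hsplit : ∀ (a b : X) (f g : ℕ → X), a + ∑ k ∈ Finset.range m, f k =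
      (b + ∑ k ∈ Finset.range m, g k) - ((b - a) + ∑ k ∈ Finset.range m, (g k - f k)) := by
      intro a b f g
      rw [Finset.sum_sub_distrib]; abel
    rw [hsplit _ (U (e i)) _ (fun k => U (e (n k)))]
    refine (norm_sub_le _ _).trans (add_le_add hup ?_)
    refine (norm_add_le _ _).trans ?_
    have : ‖∑ k ∈ Finset.range m, (U (e (n k)) -
        ∑ i ∈ Finset.Ioc (K k) (K (k+1)), tsCoord hX (U (e (n k))) i • e i)‖ ≤ m * η := by
      refine (norm_sum_le _ _).trans ((Finset.sum_le_sum fun k _ => (hn k).2.1.le).trans ?_)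
      simp
    linarith
  -- admissible family
  have hrK : ∀ k, r ≤ K k := fun k => hK0r.trans (hKz ▸ hK.monotone (Nat.zero_le k))
  let E : Fin (m+1) → Finset ℕ+ := Fin.cons {r} (fun k : Fin m => Finset.Ioc (K k) (K (k+1)))
  have hE : TsAdmissible (Schreier 1) E := by
    apply adm_of
    · intro l
      refine Fin.cases ?_ (fun k => ?_) l
      · exact ⟨r, by simp [E]⟩
      · exact ⟨K (k+1), by simp [E, hK (Nat.lt_succ_self k)]⟩
    · intro l l'
      refine Fin.cases ?_ (fun k => ?_) l
      · refine Fin.cases ?_ (fun k' => ?_) l'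
        · intro h; exact absurd h (lt_irrefl _)
        · intro _ a ha b hb
          simp only [E, Fin.cons_zero, Fin.cons_succ, Finset.mem_singleton, Finset.mem_Ioc] at ha hb
          rw [ha]; exact (hrK k').trans_lt hb.1
      · refine Fin.cases ?_ (fun k' => ?_) l'
        · intro h; exact absurd h (Fin.not_lt_zero _)
        · intro h a ha b hb
          simp only [E, Fin.cons_succ, Finset.mem_Ioc] at ha hb
          have hkk : (k : ℕ) < k' := by simpa using h
          exact ha.2.trans_lt ((hK.monotone hkk).trans_lt hb.1)
    · intro l
      refine Fin.cases ?_ (fun k => ?_) l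
      · intro a ha
        simp only [E, Fin.cons_zero, Finset.mem_singleton] at ha
        rw [ha]; exact hr
      · intro a ha
        simp only [E, Fin.cons_succ, Finset.mem_Ioc] at ha
        have h2 : r < a := (hrK k).trans_lt ha.1
        have h3 : (r : ℕ) < a := h2
        omega
  have hlow := tnorm_adm h0 h1 hE z
  rw [Fin.sum_univ_succ] at hlow
  have hzr : z r = tsCoord hX (U (e i)) r := by
    rw [hz, Finsupp.add_apply, Finsupp.finsetSum_apply, Finset.sum_eq_zero]
    · rw [tsRes_apply, if_pos (Finset.mem_Icc.2 ⟨one_le, hK0r⟩), add_zero]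
    · intro k _
      rw [tsRes_apply, if_neg]
      intro h
      exact absurd (Finset.mem_Ioc.1 h).1 (not_lt.2 (hrK k))
  have hfirst : δ ≤ tnorm θ (Schreier 1) (tsProj (E 0) z) := by
    have := abs_le_tnorm (S := Schreier 1) h0 h1 (tsProj (E 0) z) r
    rw [tsProj_apply, if_pos (by simp [E]), hzr] at this
    exact this
  have hrest : ∀ k : Fin m, 1 - η ≤ tnorm θ (Schreier 1) (tsProj (E k.succ) z) := by
    intro k
    have heq : tsProj (E k.succ) z = tsRes hX (Finset.Ioc (K k) (K (k+1))) (U (e (n k))) := by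
      ext q
      rw [tsProj_apply, tsRes_apply]
      simp only [E, Fin.cons_succ]
      split_ifs with hq
      · rw [Finset.mem_Ioc] at hq
        rw [hz, Finsupp.add_apply, Finsupp.finsetSum_apply, Finset.sum_eq_single (k : ℕ)]
        · rw [tsRes_apply, tsRes_apply, if_pos (Finset.mem_Ioc.2 hq), if_neg, zero_add]
          intro h
          have h2 := (Finset.mem_Icc.1 h).2
          rw [← hKz] at h2
          exact absurd (h2.trans (hK.monotone (Nat.zero_le k))) (not_le.2 hq.1)
        · intro k' _ hne
          rw [tsRes_apply, if_neg]
          intro h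
          rw [Finset.mem_Ioc] at h
          rcases lt_or_gt_of_ne hne with h2 | h2
          · exact absurd (h.2.trans (hK.monotone h2)) (not_le.2 hq.1)
          · exact absurd (hq.2.trans (hK.monotone h2)) (not_le.2 h.1)
        · intro h; exact absurd (Finset.mem_range.2 k.2) h
      · rfl
    rw [heq, ← norm_lc hX, lc_tsRes]
    have h2 := (hn k).2.1
    have h3 : ‖U (e (n k))‖ = 1 := by rw [U.norm_map, norm_e hX h0 h1]
    have h4 := norm_sub_norm_le (U (e (n k)))
      (∑ i ∈ Finset.Ioc (K k) (K (k+1)), tsCoord hX (U (e (n k))) i • e i)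
    linarith
  have hsum : (m : ℝ) * (1 - η) ≤ ∑ k : Fin m, tnorm θ (Schreier 1) (tsProj (E k.succ) z) := by
    have := Finset.sum_le_sum (s := Finset.univ) fun k (_ : k ∈ Finset.univ) => hrest k
    rw [Finset.sum_const, Finset.card_univ, Fintype.card_fin, nsmul_eq_mul] at this
    exact this
  have h8 : θ * (δ + m * (1 - η)) ≤ θ * m + (m + 1) * η :=
    (mul_le_mul_of_nonneg_left (add_le_add hfirst hsum) h0.le).trans (hlow.trans hznorm)
  nlinarith

lemma norm_pair (hX : IsTsirelsonSpace θ 1 X e) (h0 : 0 < θ) (hθ : θ ≤ 1/2) {i j : ℕ+}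
    (hij : i ≠ j) {s : ℝ} (hs : |s| = 1) : ‖e i + s • e j‖ ≤ 1 := by
  have h1 : θ ≤ 1 := by linarith
  have h2 : e i + s • e j = Finsupp.linearCombination ℝ e
    (Finsupp.single i 1 + Finsupp.single j s) := by simp
  rw [h2, norm_lc hX]
  have hap : ∀ k, |(Finsupp.single i (1:ℝ) + Finsupp.single j s) k| ≤
      (if k = i then 1 else 0) + (if k = j then 1 else 0) := by
    intro k
    rw [Finsupp.add_apply, Finsupp.single_apply, Finsupp.single_apply]
    refine (abs_add_le _ _).trans (le_of_eq ?_)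
    congr 1
    · by_cases h : i = k
      · simp [h]
      · simp [h, Ne.symm h]
    · by_cases h : j = k
      · simp [h, hs]
      · simp [h, Ne.symm h]
  refine tnorm_le_max h0 h1 (fun k => (hap k).trans ?_) ?_
  · by_cases h : k = i
    · subst h; simp [hij]
    · simp only [h, if_false, zero_add]; split_ifs <;> norm_num
  · have : tsl1 (Finsupp.single i (1:ℝ) + Finsupp.single j s) ≤ 2 := by
      refine (Finset.sum_le_sum fun k _ => hap k).trans ?_
      rw [Finset.sum_add_distrib, Finset.sum_ite_eq', Finset.sum_ite_eq']
      split_ifs <;> norm_num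
    nlinarith

lemma pair_zero (hX : IsTsirelsonSpace θ 1 X e) (h0 : 0 < θ) (hθ : θ ≤ 1/2) (U : X →ₗᵢ[ℝ] X)
    {i j r : ℕ+} (hij : i ≠ j) (h : |tsCoord hX (U (e i)) r| = 1) :
    tsCoord hX (U (e j)) r = 0 := by
  have h1 : θ ≤ 1 := by linarith
  have key : ∀ s : ℝ, |s| = 1 → |tsCoord hX (U (e i)) r + s * tsCoord hX (U (e j)) r| ≤ 1 := by
    intro s hs
    have h2 := abs_coord_le hX h0 h1 (U (e i + s • e j)) r
    rw [U.norm_map, map_add, map_smul, coord_add, coord_smul] at h2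
    exact h2.trans (norm_pair hX h0 hθ hij hs)
  have ha := abs_le.1 (key 1 (by simp))
  have hb := abs_le.1 (key (-1) (by simp))
  rcases (abs_eq zero_le_one).1 h with h' | h' <;> rw [h'] at ha hb <;> linarith

lemma eq_single (hX : IsTsirelsonSpace θ 1 X e) {x : X} {r : ℕ+}
    (h : ∀ r', r' ≠ r → tsCoord hX x r' = 0) : x = tsCoord hX x r • e r := by
  refine (coord_hasSum hX x).unique ?_
  exact hasSum_single (f := fun i => tsCoord hX x i • e i) r fun r' hr' => by simp [h r' hr']

end coords

/-- Every linear isometry of `T[θ, S₁]` maps `e_i` to `ε_i e_{π i}`,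
where `π` is a permutation of `{1, …, ⌈θ⁻¹⌉}` (fixing all larger indices). -/
theorem tsirelson_linearIsometry_form
    (θ : ℝ) (hθ0 : 0 < θ) (hθ : θ ≤ 1 / 2)
    (X : Type*) [NormedAddCommGroup X] [NormedSpace ℝ X] (e : ℕ+ → X)
    (hX : IsTsirelsonSpace θ 1 X e) (U : X →ₗᵢ[ℝ] X) :
    ∃ (ε : ℕ+ → ℝ) (π : Equiv.Perm ℕ+),
      (∀ i, ε i = 1 ∨ ε i = -1) ∧
      (∀ i : ℕ+, ⌈θ⁻¹⌉₊ < (i : ℕ) → π i = i) ∧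
      (∀ i : ℕ+, U (e i) = ε i • e (π i)) := by
  have h1 : θ ≤ 1 := by linarith
  have hinv : 0 < θ⁻¹ := inv_pos.2 hθ0
  obtain ⟨N, hN⟩ : ∃ N : ℕ+, (N : ℕ) = ⌈θ⁻¹⌉₊ := ⟨⟨⌈θ⁻¹⌉₊, Nat.ceil_pos.2 hinv⟩, rfl⟩
  rw [← hN]
  have hN1 : 1 ≤ θ * ((N : ℕ) : ℝ) := by
    have := Nat.le_ceil (θ⁻¹)
    rw [← hN] at this
    calc 1 = θ * θ⁻¹ := (mul_inv_cancel₀ hθ0.ne').symm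
      _ ≤ _ := mul_le_mul_of_nonneg_left this hθ0.le
  have hN2 : θ * (((N : ℕ) : ℝ) - 1) ≤ 1 := by
    have := Nat.ceil_lt_add_one hinv.le
    rw [← hN] at this
    calc θ * (((N : ℕ) : ℝ) - 1) ≤ θ * θ⁻¹ := mul_le_mul_of_nonneg_left (by linarith) hθ0.le
      _ = 1 := mul_inv_cancel₀ hθ0.ne'
  have hnorm : ∀ i, ‖U (e i)‖ = 1 := fun i => by rw [U.norm_map, norm_e hX hθ0 h1]
  have tri1 : ∀ i r : ℕ+, i ≤ N → N < r → tsCoord hX (U (e i)) r = 0 := fun i r hi hr =>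
    triangular hX hθ0 hθ U (m := (N : ℕ)) hi hN1 hr
  have tri2 : ∀ i r : ℕ+, N < i → i < r → tsCoord hX (U (e i)) r = 0 := fun i r hi hr =>
    triangular hX hθ0 hθ U (m := (i : ℕ)) le_rfl (hN1.trans (mul_le_mul_of_nonneg_left
      (by have : (N : ℕ) < (i : ℕ) := hi
          exact_mod_cast this.le) hθ0.le)) hr
  -- the initial block
  have hex : ∀ i : ℕ+, ∃ r : ℕ+, (i ≤ N → r ≤ N ∧ |tsCoord hX (U (e i)) r| = 1) ∧
      (N < i → r = i) := by
    intro i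
    rcases le_or_gt i N with hi | hi
    · obtain ⟨r, hr, hmax⟩ := Finset.exists_max_image (Finset.Icc 1 N)
        (fun r => |tsCoord hX (U (e i)) r|) ⟨1, Finset.mem_Icc.2 ⟨le_rfl, one_le⟩⟩
      refine ⟨r, fun _ => ⟨(Finset.mem_Icc.1 hr).2, le_antisymm ?_ ?_⟩,
        fun h => absurd hi (not_le.2 h)⟩
      · rw [← hnorm i]; exact abs_coord_le hX hθ0 h1 _ _
      · have heq : U (e i) = Finsupp.linearCombination ℝ e
            (tsRes hX (Finset.Icc 1 N) (U (e i))) := by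
          rw [lc_tsRes]
          refine (coord_hasSum hX (U (e i))).unique (hasSum_sum_of_ne_finset_zero fun r hr => ?_)
          rw [tri1 i r hi, zero_smul]
          by_contra h
          exact hr (Finset.mem_Icc.2 ⟨one_le, not_lt.1 h⟩)
        rw [← hnorm i]
        conv_lhs => rw [heq]
        rw [norm_lc hX]
        refine tnorm_linf hθ0 h1 hN2 (fun k => ?_) (fun k hk => ?_)
        · rw [tsRes_apply]
          split_ifs with h
          · exact hmax k h
          · rw [abs_zero]; exact abs_nonneg _
        · rw [tsRes_apply, if_neg]
          intro h
          have h2 : (k : ℕ) ≤ (N : ℕ) := (Finset.mem_Icc.1 h).2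
          omega
    · exact ⟨i, fun h => absurd h (not_le.2 hi), fun _ => rfl⟩
  choose p hp1 hp2 using hex
  have hinjN : ∀ i j, i ≤ N → j ≤ N → p i = p j → i = j := by
    intro i j hi hj hij
    by_contra hne
    have h2 := pair_zero hX hθ0 hθ U hne (hp1 i hi).2
    have h3 := (hp1 j hj).2
    rw [← hij, h2] at h3
    simp at h3
  have hinj : Function.Injective p := by
    intro i j hij
    rcases le_or_gt i N with hi | hi <;> rcases le_or_gt j N with hj | hj
    · exact hinjN i j hi hj hij
    · have h2 := (hp1 i hi).1
      rw [hij, hp2 j hj] at h2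
      exact absurd h2 (not_le.2 hj)
    · have h2 := (hp1 j hj).1
      rw [← hij, hp2 i hi] at h2
      exact absurd h2 (not_le.2 hi)
    · rw [← hp2 i hi, ← hp2 j hj, hij]
  have hsurN : ∀ r, r ≤ N → ∃ i, i ≤ N ∧ p i = r := by
    intro r hr
    have h2 : (Finset.Icc 1 N).image p = Finset.Icc 1 N := by
      refine Finset.eq_of_subset_of_card_le ?_ ?_
      · intro q hq
        obtain ⟨i, hi, rfl⟩ := Finset.mem_image.1 hq
        exact Finset.mem_Icc.2 ⟨one_le, (hp1 i (Finset.mem_Icc.1 hi).2).1⟩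
      · rw [Finset.card_image_of_injective _ hinj]
    have h3 : r ∈ (Finset.Icc 1 N).image p := by
      rw [h2]; exact Finset.mem_Icc.2 ⟨one_le, hr⟩
    obtain ⟨i, hi, hir⟩ := Finset.mem_image.1 h3
    exact ⟨i, (Finset.mem_Icc.1 hi).2, hir⟩
  have hsur : Function.Surjective p := by
    intro r
    rcases le_or_gt r N with hr | hr
    · obtain ⟨i, -, h⟩ := hsurN r hr
      exact ⟨i, h⟩
    · exact ⟨r, hp2 r hr⟩
  have hone : ∀ i, |tsCoord hX (U (e i)) (p i)| = 1 := by
    intro i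
    induction i using PNat.strongInductionOn with
    | _ i ih =>
    rcases le_or_gt i N with hi | hi
    · exact (hp1 i hi).2
    · rw [hp2 i hi]
      have hz : ∀ r', r' ≠ i → tsCoord hX (U (e i)) r' = 0 := by
        intro r' hne
        rcases lt_or_gt_of_ne hne with hlt | hgt
        · rcases le_or_gt r' N with hr | hr
          · obtain ⟨j, hj, hjr⟩ := hsurN r' hr
            have hji : j < i := hj.trans_lt hi
            have h2 := ih j hji
            rw [hjr] at h2
            exact pair_zero hX hθ0 hθ U hji.ne h2
          · have h2 := ih r' hlt
            rw [hp2 r' hr] at h2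
            exact pair_zero hX hθ0 hθ U hne h2
        · exact tri2 i r' hi hgt
      have h2 := eq_single hX hz
      have h3 := hnorm i
      rw [h2, norm_smul, norm_e hX hθ0 h1, mul_one] at h3
      exact h3
  refine ⟨fun i => tsCoord hX (U (e i)) (p i), Equiv.ofBijective p ⟨hinj, hsur⟩, ?_, ?_, ?_⟩
  · intro i
    exact (abs_eq zero_le_one).1 (hone i)
  · intro i hi
    exact hp2 i hi
  · intro i
    refine eq_single hX fun r' hr' => ?_
    obtain ⟨j, rfl⟩ := hsur r'
    have hji : j ≠ i := fun h => hr' (by rw [h])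
    exact pair_zero hX hθ0 hθ U hji (hone j)
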